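/- arXiv:2506.08374 — 10 statements merged into one kernel-verified Lean document; each statement's English description precedes it below -/
import Mathlib

section
/- Let τ > 0 and u ∈ ℝ^m. A point z ∈ ℝ^m belongs to Prox_{τg}(u) if and only if for every coordinate i ∈ {1,…,m}: z_i = 0 when u_i < √(2τμ); z_i ∈ {0, u_i} when u_i = √(2τμ); and z_i = u_i when u_i > √(2τμ). -/
open scoped RealInnerProductSpace
open Filter Topology

/- Number of nonzero coordinates of `z` (the "ℓ₀ norm"). -/
open Classical in
noncomputable def zeroNorm {m : ℕ} (z : EuclideanSpace ℝ (Fin m)) : ℕ :=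
  (Finset.univ.filter fun i => z i ≠ 0).card

/- `g(z) = μ‖z‖₀` if `z ≥ 0` componentwise, `+∞` otherwise. -/
open Classical in
noncomputable def gfun {m : ℕ} (μ : ℝ) (z : EuclideanSpace ℝ (Fin m)) : EReal :=
  if ∀ i, 0 ≤ z i then ((μ * zeroNorm z : ℝ) : EReal) else ⊤

/- The proximal set `Prox_{τ g}(u)`: minimizers of `g(z) + (1/(2τ))‖z - u‖²`. -/
noncomputable def proxSet {m : ℕ} (μ τ : ℝ) (u : EuclideanSpace ℝ (Fin m)) :
    Set (EuclideanSpace ℝ (Fin m)) :=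
  {z | ∀ w, gfun μ z + ((1 / (2 * τ) * ‖z - u‖ ^ 2 : ℝ) : EReal)
        ≤ gfun μ w + ((1 / (2 * τ) * ‖w - u‖ ^ 2 : ℝ) : EReal)}


/-- scalar objective -/
noncomputable def phiS (μ τ v a : ℝ) : ℝ :=
  (if a = 0 then 0 else μ) + 1 / (2 * τ) * (a - v) ^ 2

theorem phiS_iff (μ τ : ℝ) (hμ : 0 < μ) (hτ : 0 < τ) (v a : ℝ) :
    (0 ≤ a ∧ ∀ b, 0 ≤ b → phiS μ τ v a ≤ phiS μ τ v b) ↔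
      ((v < Real.sqrt (2 * τ * μ) → a = 0) ∧
        (v = Real.sqrt (2 * τ * μ) → a = 0 ∨ a = v) ∧
        (Real.sqrt (2 * τ * μ) < v → a = v)) := by
  have hp : 0 < 2 * τ * μ := by positivity
  have hs : 0 < Real.sqrt (2 * τ * μ) := Real.sqrt_pos.2 hp
  have hs2 : Real.sqrt (2 * τ * μ) ^ 2 = 2 * τ * μ := Real.sq_sqrt hp.le
  have key : ∀ x y : ℝ, phiS μ τ v x ≤ phiS μ τ v y ↔
      (if x = 0 then 0 else Real.sqrt (2 * τ * μ) ^ 2) + (x - v) ^ 2 ≤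
      (if y = 0 then 0 else Real.sqrt (2 * τ * μ) ^ 2) + (y - v) ^ 2 := by
    have e : ∀ x, (if x = 0 then 0 else Real.sqrt (2 * τ * μ) ^ 2) + (x - v) ^ 2
        = 2 * τ * phiS μ τ v x := by
      intro x
      unfold phiS
      rw [hs2]
      split_ifs <;> field_simp <;> ring
    intro x y
    rw [e, e]
    exact (mul_le_mul_iff_right₀ (by positivity)).symm
  simp only [key]
  generalize Real.sqrt (2 * τ * μ) = s at hs
  clear key hs2
  constructor
  · rintro ⟨ha, h⟩
    have h0 := h 0 le_rfl
    by_cases a0 : a = 0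
    · subst a0
      refine ⟨fun _ => rfl, fun _ => Or.inl rfl, fun hv => ?_⟩
      have h1 := h v (by linarith)
      have : v ≠ 0 := by linarith
      simp [this] at h1
      nlinarith
    · have ap : 0 < a := lt_of_le_of_ne ha (Ne.symm a0)
      simp only [a0, if_false, if_true] at h0 h
      have hv : 0 < v := by nlinarith
      have h1 := h v hv.le
      simp only [hv.ne', if_false] at h1
      have : a - v = 0 := by
        have : (a - v) ^ 2 = 0 := le_antisymm (by linarith) (sq_nonneg _)
        simpa using this
      have : a = v := by linarith
      refine ⟨fun hv' => ?_, fun _ => Or.inr this, fun _ => this⟩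
      subst this
      nlinarith
  · rintro ⟨h1, h2, h3⟩
    have : (a = 0 ∧ v ≤ s) ∨ (a = v ∧ s ≤ v) := by
      rcases lt_trichotomy v s with h | h | h
      · exact Or.inl ⟨h1 h, h.le⟩
      · rcases h2 h with h' | h'
        · exact Or.inl ⟨h', h.le⟩
        · exact Or.inr ⟨h', h.ge⟩
      · exact Or.inr ⟨h3 h, h.le⟩
    rcases this with ⟨rfl, hv⟩ | ⟨rfl, hv⟩
    · refine ⟨le_rfl, fun b hb => ?_⟩
      by_cases b0 : b = 0
      · simp [b0]
      · simp only [b0, if_false, if_true]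
        nlinarith [sq_nonneg (b - s), mul_le_mul_of_nonneg_left hv hb]
    · refine ⟨by linarith, fun b hb => ?_⟩
      have : a ≠ 0 := by linarith
      by_cases b0 : b = 0
      · simp only [this, b0, if_false, if_true]; nlinarith
      · simp only [this, b0, if_false]; nlinarith [sq_nonneg (b - a)]

theorem obj_eq {m : ℕ} (μ τ : ℝ) (u z : EuclideanSpace ℝ (Fin m)) (hz : ∀ i, 0 ≤ z i) :
    gfun μ z + ((1 / (2 * τ) * ‖z - u‖ ^ 2 : ℝ) : EReal)
      = ((∑ i, phiS μ τ (u i) (z i) : ℝ) : EReal) := by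
  unfold gfun
  rw [if_pos hz, ← EReal.coe_add]
  congr 1
  unfold phiS zeroNorm
  rw [Finset.sum_add_distrib, EuclideanSpace.real_norm_sq_eq, Finset.mul_sum, Finset.card_filter]
  congr 1
  push_cast
  rw [Finset.mul_sum]
  refine Finset.sum_congr rfl fun i _ => ?_
  by_cases h : z i = 0 <;> simp [h]

theorem obj_top {m : ℕ} (μ τ : ℝ) (u z : EuclideanSpace ℝ (Fin m)) (hz : ¬ ∀ i, 0 ≤ z i) :
    gfun μ z + ((1 / (2 * τ) * ‖z - u‖ ^ 2 : ℝ) : EReal) = ⊤ := by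
  unfold gfun
  rw [if_neg hz, EReal.top_add_coe]

/-- characterization of the proximal operator of `g`. -/
theorem stmt0 {m : ℕ} (μ τ : ℝ) (hμ : 0 < μ) (hτ : 0 < τ)
    (u z : EuclideanSpace ℝ (Fin m)) :
    z ∈ proxSet μ τ u ↔
      ∀ i : Fin m,
        (u i < Real.sqrt (2 * τ * μ) → z i = 0) ∧
        (u i = Real.sqrt (2 * τ * μ) → z i = 0 ∨ z i = u i) ∧
        (Real.sqrt (2 * τ * μ) < u i → z i = u i) := by
  simp only [← phiS_iff μ τ hμ hτ]
  unfold proxSet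
  rw [Set.mem_ofPred_eq]
  constructor
  · intro h
    have hz : ∀ i, 0 ≤ z i := by
      by_contra hz
      have h0 := h 0
      rw [obj_top μ τ u z hz, obj_eq μ τ u 0 (by simp)] at h0
      exact absurd h0 (by simp)
    intro i
    refine ⟨hz i, fun b hb => ?_⟩
    have hw : ∀ j, 0 ≤ (WithLp.toLp 2 (Function.update (⇑z) i b) : EuclideanSpace ℝ (Fin m)) j := by
      intro j
      by_cases hj : j = i
      · subst hj; simpa using hb
      · simpa [hj] using hz j
    have h1 := h (WithLp.toLp 2 (Function.update (⇑z) i b))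
    rw [obj_eq μ τ u z hz, obj_eq μ τ u _ hw, EReal.coe_le_coe_iff,
      ← Finset.add_sum_erase _ _ (Finset.mem_univ i),
      ← Finset.add_sum_erase _ _ (Finset.mem_univ i)] at h1
    have e : ∑ j ∈ Finset.univ.erase i, phiS μ τ (u j)
        ((WithLp.toLp 2 (Function.update (⇑z) i b) : EuclideanSpace ℝ (Fin m)) j)
        = ∑ j ∈ Finset.univ.erase i, phiS μ τ (u j) (z j) := by
      refine Finset.sum_congr rfl fun j hj => ?_
      simp [Finset.ne_of_mem_erase hj]
    rw [e] at h1
    simp only [Function.update_self] at h1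
    linarith
  · intro h w
    by_cases hw : ∀ i, 0 ≤ w i
    · rw [obj_eq μ τ u z fun i => (h i).1, obj_eq μ τ u w hw, EReal.coe_le_coe_iff]
      exact Finset.sum_le_sum fun i _ => (h i).2 _ (hw i)
    · rw [obj_top μ τ u w hw]; exact le_top
end

section
/- Let z, u ∈ ℝ^m with z_i ≥ 0 for all i. (a) If z ∈ Prox_{τg}(z + τu) for some τ > 0, then u_i = 0 for every i with z_i > 0 (i.e., u ∈ ∂g(z)). (b) Conversely, if u_i = 0 for every i with z_i > 0, then z ∈ Prox_{τg}(z + τu) for every τ with 0 < τ < min{τ₁(z), τ₂(u)}, where τ₁(z) := +∞ if z = 0 and τ₁(z) := min{ z_i²/(2μ) : z_i > 0 } otherwise, and τ₂(u) := +∞ if u_i ≤ 0 for all i and τ₂(u) := min{ 2μ/u_i² : u_i > 0 } otherwise. -/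
open scoped RealInnerProductSpace
open Filter Topology

open Classical in
theorem aux_obj {m : ℕ} (μ τ : ℝ) (w v : EuclideanSpace ℝ (Fin m)) (hw : ∀ i, 0 ≤ w i) :
    gfun μ w + ((1 / (2 * τ) * ‖w - v‖ ^ 2 : ℝ) : EReal)
      = ((∑ i, ((if w i ≠ 0 then μ else 0) + 1 / (2 * τ) * (w i - v i) ^ 2) : ℝ) : EReal) := by
  have h1 : μ * (zeroNorm w : ℝ) = ∑ i, (if w i ≠ 0 then μ else 0) := by
    unfold zeroNorm
    rw [← Finset.sum_filter, Finset.sum_const, nsmul_eq_mul, mul_comm]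
  have h2 : ‖w - v‖ ^ 2 = ∑ i, (w i - v i) ^ 2 := by
    rw [EuclideanSpace.norm_sq_eq]
    simp
  rw [gfun, if_pos hw, ← EReal.coe_add, h1, h2, Finset.sum_add_distrib, Finset.mul_sum]

/-- (a) `z ∈ Prox_{τg}(z + τu)` for some `τ > 0` implies `u ∈ ∂g(z)`;
(b) conversely `u ∈ ∂g(z)` implies `z ∈ Prox_{τg}(z + τu)` for every
`0 < τ < min{τ₁(z), τ₂(u)}`, where `τ < τ₁(z)` means `τ < zᵢ²/(2μ)` for every `i`
with `zᵢ > 0`, and `τ < τ₂(u)` means `τ < 2μ/uᵢ²` for every `i` with `uᵢ > 0`. -/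
theorem stmt3 {m : ℕ} (μ : ℝ) (hμ : 0 < μ)
    (z u : EuclideanSpace ℝ (Fin m)) (hz : ∀ i, 0 ≤ z i) :
    ((∃ τ : ℝ, 0 < τ ∧ z ∈ proxSet μ τ (z + τ • u)) →
      (∀ i, 0 < z i → u i = 0)) ∧
    ((∀ i, 0 < z i → u i = 0) →
      ∀ τ : ℝ, 0 < τ →
        (∀ i, 0 < z i → τ < (z i) ^ 2 / (2 * μ)) →
        (∀ i, 0 < u i → τ < 2 * μ / (u i) ^ 2) →
        z ∈ proxSet μ τ (z + τ • u)) := by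
  classical
  constructor
  · rintro ⟨τ, hτ, hp⟩ i hi
    by_contra hu
    obtain ⟨s, hs1, hs2⟩ : ∃ s : ℝ, 0 < z i + s ∧ (s - τ * u i) ^ 2 < (τ * u i) ^ 2 := by
      rcases lt_or_gt_of_ne hu with h | h
      · have h' : τ * u i < 0 := mul_neg_of_pos_of_neg hτ h
        refine ⟨max (τ * u i) (-(z i) / 2), ?_, ?_⟩
        · have := le_max_right (τ * u i) (-(z i) / 2)
          linarith
        · have h3 := le_max_left (τ * u i) (-(z i) / 2)
          have h4 : max (τ * u i) (-(z i) / 2) < 0 := max_lt h' (by linarith)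
          nlinarith
      · have h' : 0 < τ * u i := mul_pos hτ h
        exact ⟨τ * u i, by linarith, by simpa using pow_pos h' 2⟩
    have hq := hp (WithLp.toLp 2 (Function.update (fun j => z j) i (z i + s)))
    rw [aux_obj _ _ _ _ hz, aux_obj, EReal.coe_le_coe_iff] at hq
    · revert hq
      rw [imp_false, not_le]
      apply Finset.sum_lt_sum
      · intro j _
        by_cases hj : j = i
        · subst hj
          simp only [Function.update_self, PiLp.add_apply, PiLp.smul_apply, smul_eq_mul]
          rw [if_pos hs1.ne', if_pos hi.ne']
          have : (0:ℝ) < 1 / (2 * τ) := by positivity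
          nlinarith
        · simp [Function.update_of_ne hj]
      · refine ⟨i, Finset.mem_univ _, ?_⟩
        simp only [Function.update_self, PiLp.add_apply, PiLp.smul_apply, smul_eq_mul]
        rw [if_pos hs1.ne', if_pos hi.ne']
        have : (0:ℝ) < 1 / (2 * τ) := by positivity
        nlinarith
    · intro j
      by_cases hj : j = i
      · subst hj
        simpa using hs1.le
      · simpa [Function.update_of_ne hj] using hz j
  · intro hu τ hτ h1 h2 w
    by_cases hw : ∀ i, 0 ≤ w i
    · rw [aux_obj _ _ _ _ hz, aux_obj _ _ _ _ hw, EReal.coe_le_coe_iff]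
      apply Finset.sum_le_sum
      intro i _
      simp only [PiLp.add_apply, PiLp.smul_apply, smul_eq_mul]
      have hc : (0:ℝ) < 1 / (2 * τ) := by positivity
      have hcc : 1 / (2 * τ) * τ = 1 / 2 := by field_simp
      generalize 1 / (2 * τ) = c at hc hcc
      rcases (hz i).lt_or_eq with hi | hi
      · rw [hu i hi, if_pos hi.ne']
        have ha := h1 i hi
        rw [lt_div_iff₀ (by positivity)] at ha
        by_cases hwi : w i = 0
        · rw [hwi]
          simp
          nlinarith
        · simp [hwi]
          positivity
      · rw [← hi]
        by_cases hwi : w i = 0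
        · simp [hwi]
        · have hwp : 0 < w i := lt_of_le_of_ne (hw i) (Ne.symm hwi)
          simp only [ne_eq, not_true_eq_false, if_false, hwi, not_false_eq_true, if_true]
          rcases le_or_gt (u i) 0 with h | h
          · have : 0 ≤ -(τ * u i) * w i := mul_nonneg (by nlinarith) hwp.le
            have : 0 ≤ c * (w i ^ 2 + 2 * (-(τ * u i) * w i)) := by positivity
            nlinarith
          · have ha := h2 i h
            rw [lt_div_iff₀ (by positivity)] at ha
            have h5 : c * (0 - (0 + τ * u i)) ^ 2 = (c * τ) * (τ * u i ^ 2) := by ring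
            rw [h5, hcc]
            have : 0 ≤ c * (w i - (0 + τ * u i)) ^ 2 := by positivity
            linarith
    · have : gfun μ w = ⊤ := if_neg hw
      rw [this, EReal.top_add_coe]
      exact le_top
end

section
/- Let z, u ∈ ℝ^m and τ > 0 be such that z ∈ Prox_{τg}(z + τu). Then for every τ' with 0 < τ' < τ, the set Prox_{τ'g}(z + τ'u) is a singleton and Prox_{τ'g}(z + τ'u) = {z}. -/
open scoped RealInnerProductSpace
open Filter Topology

theorem aux_expand {m : ℕ} (τ : ℝ) (hτ : 0 < τ) (z u w : EuclideanSpace ℝ (Fin m)) :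
    1 / (2 * τ) * ‖w - (z + τ • u)‖ ^ 2
      = 1 / (2 * τ) * ‖w - z‖ ^ 2 - inner ℝ (w - z) u + τ / 2 * ‖u‖ ^ 2 := by
  have h : w - (z + τ • u) = (w - z) - τ • u := by abel
  rw [h, norm_sub_sq_real, inner_smul_right, norm_smul, mul_pow, Real.norm_eq_abs, sq_abs]
  field_simp

/-- if `z ∈ Prox_{τg}(z + τu)`, then for every `0 < τ' < τ` the set
`Prox_{τ'g}(z + τ'u)` is the singleton `{z}`. -/
theorem stmt4 {m : ℕ} (μ τ : ℝ) (hμ : 0 < μ) (hτ : 0 < τ)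
    (z u : EuclideanSpace ℝ (Fin m))
    (hprox : z ∈ proxSet μ τ (z + τ • u)) :
    ∀ τ' : ℝ, 0 < τ' → τ' < τ → proxSet μ τ' (z + τ' • u) = {z} := by
  intro τ' h0 hlt
  have hz : ∀ i, 0 ≤ z i := by
    by_contra hz
    have h := hprox 0
    have h2 : ∀ i, 0 ≤ (0 : EuclideanSpace ℝ (Fin m)) i := fun i => by simp
    rw [gfun, gfun, if_neg hz, if_pos h2, EReal.top_add_coe, ← EReal.coe_add] at h
    exact EReal.coe_ne_top _ (top_le_iff.mp h)
  have key : ∀ w : EuclideanSpace ℝ (Fin m), (∀ i, 0 ≤ w i) →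
      μ * zeroNorm z + 1 / (2 * τ') * ‖z - (z + τ' • u)‖ ^ 2
        + (1 / (2 * τ') - 1 / (2 * τ)) * ‖w - z‖ ^ 2
        ≤ μ * zeroNorm w + 1 / (2 * τ') * ‖w - (z + τ' • u)‖ ^ 2 := by
    intro w hw
    have h := hprox w
    rw [gfun, gfun, if_pos hz, if_pos hw, ← EReal.coe_add, ← EReal.coe_add,
      EReal.coe_le_coe_iff, aux_expand τ hτ, aux_expand τ hτ] at h
    rw [aux_expand τ' h0, aux_expand τ' h0]
    simp only [sub_self, norm_zero, inner_zero_left] at h ⊢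
    linarith
  have hpos : 0 < 1 / (2 * τ') - 1 / (2 * τ) :=
    sub_pos.mpr (one_div_lt_one_div_of_lt (by linarith) (by linarith))
  ext w
  rw [Set.mem_singleton_iff]
  constructor
  · intro hwp
    have h := hwp z
    by_cases hw : ∀ i, 0 ≤ w i
    · rw [gfun, gfun, if_pos hz, if_pos hw, ← EReal.coe_add, ← EReal.coe_add,
        EReal.coe_le_coe_iff] at h
      have k := key w hw
      by_contra hne
      have : 0 < ‖w - z‖ := norm_pos_iff.mpr (sub_ne_zero.mpr hne)
      have : 0 < (1 / (2 * τ') - 1 / (2 * τ)) * ‖w - z‖ ^ 2 := by positivity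
      linarith
    · rw [gfun, gfun, if_neg hw, if_pos hz, EReal.top_add_coe, ← EReal.coe_add] at h
      exact absurd (top_le_iff.mp h) (EReal.coe_ne_top _)
  · rintro rfl v
    by_cases hv : ∀ i, 0 ≤ v i
    · rw [gfun, gfun, if_pos hz, if_pos hv, ← EReal.coe_add, ← EReal.coe_add,
        EReal.coe_le_coe_iff]
      have k := key v hv
      have : 0 ≤ (1 / (2 * τ') - 1 / (2 * τ)) * ‖v - w‖ ^ 2 := by positivity
      linarith
    · rw [gfun, gfun, if_neg hv, EReal.top_add_coe]
      exact le_top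
end

section
/- Let h : ℝ^m → ℝ be differentiable with ℓ_h-Lipschitz gradient (ℓ_h > 0) and F := h + g. If z* is a global minimizer of F over ℝ^m, then for every τ with 0 < τ < 1/ℓ_h, z* ∈ Prox_{τg}(z* − τ∇h(z*)). -/
open scoped RealInnerProductSpace
open Filter Topology

theorem descent_aux {m : ℕ} (L : ℝ)
    (h : EuclideanSpace ℝ (Fin m) → ℝ)
    (h' : EuclideanSpace ℝ (Fin m) → EuclideanSpace ℝ (Fin m))
    (hdiff : ∀ z, HasGradientAt h (h' z) z)
    (hlip : ∀ x y, ‖h' x - h' y‖ ≤ L * ‖x - y‖)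
    (z d : EuclideanSpace ℝ (Fin m)) :
    h (z + d) ≤ h z + inner ℝ (h' z) d + L / 2 * ‖d‖ ^ 2 := by
  have hder : ∀ t : ℝ, HasDerivAt
      (fun t : ℝ => h (z + t • d) - (t * inner ℝ (h' z) d + L / 2 * ‖d‖ ^ 2 * t ^ 2))
      (inner ℝ (h' (z + t • d)) d - (inner ℝ (h' z) d + L * ‖d‖ ^ 2 * t)) t := by
    intro t
    have h1 : HasDerivAt (fun t : ℝ => z + t • d) d t := by
      simpa using ((hasDerivAt_id t).smul_const d).const_add z
    have h2 := (hdiff (z + t • d)).hasFDerivAt.comp_hasDerivAt t h1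
    have h3 : HasDerivAt (fun t : ℝ => t * inner ℝ (h' z) d + L / 2 * ‖d‖ ^ 2 * t ^ 2)
        (inner ℝ (h' z) d + L * ‖d‖ ^ 2 * t) t := by
      have := ((hasDerivAt_id t).mul_const (inner ℝ (h' z) d)).add
        ((hasDerivAt_pow 2 t).const_mul (L / 2 * ‖d‖ ^ 2))
      refine this.congr_deriv ?_
      simp
      ring
    refine (h2.sub h3).congr_deriv ?_
    simp
  have hanti : AntitoneOn
      (fun t : ℝ => h (z + t • d) - (t * inner ℝ (h' z) d + L / 2 * ‖d‖ ^ 2 * t ^ 2))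
      (Set.Icc 0 1) := by
    refine antitoneOn_of_deriv_nonpos (convex_Icc 0 1)
      (fun t _ => (hder t).continuousAt.continuousWithinAt)
      (fun t _ => (hder t).differentiableAt.differentiableWithinAt) ?_
    intro t ht
    rw [interior_Icc] at ht
    rw [(hder t).deriv]
    have h1 := real_inner_le_norm (h' (z + t • d) - h' z) d
    rw [inner_sub_left] at h1
    have h2 := hlip (z + t • d) z
    rw [add_sub_cancel_left, norm_smul, Real.norm_of_nonneg ht.1.le] at h2
    have h3 := mul_le_mul_of_nonneg_right h2 (norm_nonneg d)
    nlinarith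
  have := hanti (Set.left_mem_Icc.2 zero_le_one) (Set.right_mem_Icc.2 zero_le_one) zero_le_one
  simp at this
  linarith

/-- a global minimizer of `F = h + g` (with `∇h` being
`ℓ_h`-Lipschitz) is a P-stationary point for every `τ ∈ (0, 1/ℓ_h)`. -/
theorem stmt10 {m : ℕ} (μ ℓh : ℝ) (hμ : 0 < μ) (hℓ : 0 < ℓh)
    (h : EuclideanSpace ℝ (Fin m) → ℝ)
    (h' : EuclideanSpace ℝ (Fin m) → EuclideanSpace ℝ (Fin m))
    (hdiff : ∀ z, HasGradientAt h (h' z) z)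
    (hlip : ∀ x y, ‖h' x - h' y‖ ≤ ℓh * ‖x - y‖)
    (zstar : EuclideanSpace ℝ (Fin m))
    (hmin : ∀ z, (h zstar : EReal) + gfun μ zstar ≤ (h z : EReal) + gfun μ z) :
    ∀ τ : ℝ, 0 < τ → τ < 1 / ℓh →
      zstar ∈ proxSet μ τ (zstar - τ • h' zstar) := by
  intro τ hτ hτ1 w
  have hz : ∀ i, 0 ≤ zstar i := by
    by_contra hc
    have h0 := hmin 0
    have e0 : gfun μ (0 : EuclideanSpace ℝ (Fin m)) = ((μ * zeroNorm (0 : EuclideanSpace ℝ (Fin m)) : ℝ) : EReal) := by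
      unfold gfun
      rw [if_pos (by simp)]
    have e1 : gfun μ zstar = ⊤ := by
      unfold gfun
      rw [if_neg hc]
    rw [e0, e1, EReal.coe_add_top, ← EReal.coe_add, top_le_iff] at h0
    exact EReal.coe_ne_top _ h0
  have ez : gfun μ zstar = ((μ * zeroNorm zstar : ℝ) : EReal) := by
    unfold gfun
    rw [if_pos hz]
  by_cases hw : ∀ i, 0 ≤ w i
  · have ew : gfun μ w = ((μ * zeroNorm w : ℝ) : EReal) := by
      unfold gfun
      rw [if_pos hw]
    have hm := hmin w
    rw [ez, ew, ← EReal.coe_add, ← EReal.coe_add, EReal.coe_le_coe_iff] at hm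
    rw [ez, ew, ← EReal.coe_add, ← EReal.coe_add, EReal.coe_le_coe_iff]
    have hd := descent_aux ℓh h h' hdiff hlip zstar (w - zstar)
    rw [add_sub_cancel] at hd
    have e1 : zstar - (zstar - τ • h' zstar) = τ • h' zstar := by abel
    have e2 : w - (zstar - τ • h' zstar) = (w - zstar) + τ • h' zstar := by abel
    rw [e1, e2, norm_add_sq_real, inner_smul_right, real_inner_comm]
    have e3 : 1 / (2 * τ) * (‖w - zstar‖ ^ 2 + 2 * (τ * inner ℝ (h' zstar) (w - zstar)) + ‖τ • h' zstar‖ ^ 2)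
        = 1 / τ / 2 * ‖w - zstar‖ ^ 2 + inner ℝ (h' zstar) (w - zstar) + 1 / (2 * τ) * ‖τ • h' zstar‖ ^ 2 := by
      field_simp
    rw [e3]
    have h4 : ℓh ≤ 1 / τ := by
      rw [lt_div_iff₀ hℓ] at hτ1
      rw [le_div_iff₀ hτ]
      linarith
    have h5 : ℓh / 2 * ‖w - zstar‖ ^ 2 ≤ 1 / τ / 2 * ‖w - zstar‖ ^ 2 := by gcongr
    linarith
  · have ew : gfun μ w = ⊤ := by
      unfold gfun
      rw [if_neg hw]
    rw [ew, EReal.top_add_coe]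
    exact le_top
end

section
/- Let h : ℝ^m → ℝ be differentiable and σ_h-strongly convex (σ_h > 0) and F := h + g. If z* ∈ Prox_{τg}(z* − τ∇h(z*)) for some τ > 1/σ_h, then z* is the unique global minimizer of F; more precisely, F(z) − F(z*) ≥ (σ_h/2 − 1/(2τ))‖z − z*‖² for all z ∈ ℝ^m. -/
open scoped RealInnerProductSpace
open Filter Topology

/-- if `h` is differentiable and `σ_h`-strongly convex and `z*` is
P-stationary with some `τ > 1/σ_h`, then `z*` is the unique global minimizer of
`F = h + g`, with the quadratic growth `F(z) − F(z*) ≥ (σ_h/2 − 1/(2τ))‖z − z*‖²`. -/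
theorem stmt11 {m : ℕ} (μ σh τ : ℝ) (hμ : 0 < μ) (hσ : 0 < σh)
    (h : EuclideanSpace ℝ (Fin m) → ℝ)
    (h' : EuclideanSpace ℝ (Fin m) → EuclideanSpace ℝ (Fin m))
    (hdiff : ∀ z, HasGradientAt h (h' z) z)
    (hsc : ∀ z z' : EuclideanSpace ℝ (Fin m),
      ⟪h' z', z - z'⟫ + σh / 2 * ‖z - z'‖ ^ 2 ≤ h z - h z')
    (zstar : EuclideanSpace ℝ (Fin m)) (hτ : 1 / σh < τ)
    (hstat : zstar ∈ proxSet μ τ (zstar - τ • h' zstar)) :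
    (∀ z, (((σh / 2 - 1 / (2 * τ)) * ‖z - zstar‖ ^ 2 : ℝ) : EReal) ≤
        ((h z : EReal) + gfun μ z) - ((h zstar : EReal) + gfun μ zstar)) ∧
    (∀ z, z ≠ zstar →
        (h zstar : EReal) + gfun μ zstar < (h z : EReal) + gfun μ z) := by
  have hτ0 : 0 < τ := lt_trans (by positivity) hτ
  have hc : 0 < σh / 2 - 1 / (2 * τ) := by
    have h1 : 1 < τ * σh := by rwa [div_lt_iff₀ hσ] at hτ
    have h2 : σh / 2 - 1 / (2 * τ) = (τ * σh - 1) / (2 * τ) := by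
      field_simp
    rw [h2]
    apply div_pos <;> linarith
  have hcase : ∀ z : EuclideanSpace ℝ (Fin m), gfun μ z = ⊤ ∨ ∃ b : ℝ, gfun μ z = (b : EReal) := by
    intro z
    unfold gfun
    split_ifs
    · exact Or.inr ⟨_, rfl⟩
    · exact Or.inl rfl
  have hst : ∀ w, gfun μ zstar
      + ((1 / (2 * τ) * ‖zstar - (zstar - τ • h' zstar)‖ ^ 2 : ℝ) : EReal)
        ≤ gfun μ w + ((1 / (2 * τ) * ‖w - (zstar - τ • h' zstar)‖ ^ 2 : ℝ) : EReal) := hstat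
  obtain ⟨a, ha⟩ : ∃ a : ℝ, gfun μ zstar = (a : EReal) := by
    rcases hcase zstar with h1 | h1
    · exfalso
      have h0 := hst 0
      have hg : gfun μ (0 : EuclideanSpace ℝ (Fin m))
          = ((μ * zeroNorm (0 : EuclideanSpace ℝ (Fin m)) : ℝ) : EReal) := by
        unfold gfun
        rw [if_pos]
        intro i
        simp
      rw [h1, hg, EReal.top_add_coe, ← EReal.coe_add] at h0
      exact absurd h0 (not_le.mpr (EReal.coe_lt_top _))
    · exact h1
  have key : ∀ z (b : ℝ), gfun μ z = (b : EReal) →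
      (σh / 2 - 1 / (2 * τ)) * ‖z - zstar‖ ^ 2 ≤ (h z + b) - (h zstar + a) := by
    intro z b hb
    have h1 := hst z
    rw [ha, hb, ← EReal.coe_add, ← EReal.coe_add, EReal.coe_le_coe_iff] at h1
    have e1 : zstar - (zstar - τ • h' zstar) = τ • h' zstar := by abel
    have e2 : z - (zstar - τ • h' zstar) = (z - zstar) + τ • h' zstar := by abel
    rw [e1, e2, norm_add_sq_real, inner_smul_right, real_inner_comm] at h1
    have h2 := hsc z zstar
    have e3 : 1 / (2 * τ) * (‖z - zstar‖ ^ 2 + 2 * (τ * ⟪h' zstar, z - zstar⟫)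
        + ‖τ • h' zstar‖ ^ 2) = 1 / (2 * τ) * ‖z - zstar‖ ^ 2 + ⟪h' zstar, z - zstar⟫
        + 1 / (2 * τ) * ‖τ • h' zstar‖ ^ 2 := by
      field_simp
    rw [e3] at h1
    linarith
  constructor
  · intro z
    rw [ha]
    rcases hcase z with hz | ⟨b, hb⟩
    · rw [hz, EReal.coe_add_top, ← EReal.coe_add, EReal.top_sub_coe]
      exact le_top
    · rw [hb, ← EReal.coe_add, ← EReal.coe_add, ← EReal.coe_sub, EReal.coe_le_coe_iff]
      exact key z b hb
  · intro z hne
    rw [ha]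
    rcases hcase z with hz | ⟨b, hb⟩
    · rw [hz, EReal.coe_add_top, ← EReal.coe_add]
      exact EReal.coe_lt_top _
    · rw [hb, ← EReal.coe_add, ← EReal.coe_add, EReal.coe_lt_coe_iff]
      have h1 := key z b hb
      have h2 : 0 < ‖z - zstar‖ := norm_pos_iff.mpr (sub_ne_zero.mpr hne)
      have h3 : 0 < (σh / 2 - 1 / (2 * τ)) * ‖z - zstar‖ ^ 2 := by positivity
      linarith
end

section
/- Let h : ℝ^m → ℝ be convex and differentiable, and let z* ∈ ℝ^m satisfy z* ∈ Prox_{τg}(z* − τ∇h(z*)) for some τ > 0. Then there exists δ > 0 such that for all z ∈ ℝ^m with ‖z − z*‖ < δ and z_i ≥ 0 for all i: if z has the same support as z* (i.e., { i : z_i ≠ 0 } = { i : z*_i ≠ 0 }), then ‖z‖₀ = ‖z*‖₀ and h(z) ≥ h(z*); otherwise, h(z) + μ‖z‖₀ ≥ h(z*) + μ‖z*‖₀ + μ/2. -/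
open scoped RealInnerProductSpace
open Filter Topology

theorem prox_ineq {m : ℕ} (μ τ : ℝ) (hτ : 0 < τ) (zs d : EuclideanSpace ℝ (Fin m))
    (hstat : zs ∈ proxSet μ τ (zs - τ • d)) :
    (∀ i, 0 ≤ zs i) ∧ ∀ w : EuclideanSpace ℝ (Fin m), (∀ i, 0 ≤ w i) →
      μ * zeroNorm zs ≤ μ * zeroNorm w + (1 / (2 * τ) * ‖w - zs‖ ^ 2 + inner ℝ (w - zs) d) := by
  have hn : ∀ i, 0 ≤ zs i := by
    by_contra hc
    have h0 := hstat 0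
    unfold gfun at h0
    rw [if_neg hc, if_pos (by simp), EReal.top_add_coe, ← EReal.coe_add, top_le_iff] at h0
    exact EReal.coe_ne_top _ h0
  refine ⟨hn, fun w hw => ?_⟩
  have h1 := hstat w
  unfold gfun at h1
  rw [if_pos hn, if_pos hw, ← EReal.coe_add, ← EReal.coe_add, EReal.coe_le_coe_iff] at h1
  have e1 : zs - (zs - τ • d) = τ • d := by abel
  have e2 : w - (zs - τ • d) = (w - zs) + τ • d := by abel
  rw [e1, e2, norm_add_sq_real, inner_smul_right] at h1
  have e3 : 1 / (2 * τ) * (‖w - zs‖ ^ 2 + 2 * (τ * inner ℝ (w - zs) d) + ‖τ • d‖ ^ 2)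
      = 1 / (2 * τ) * ‖w - zs‖ ^ 2 + inner ℝ (w - zs) d + 1 / (2 * τ) * ‖τ • d‖ ^ 2 := by
    field_simp
  rw [e3] at h1
  linarith

theorem zeroNorm_congr {m : ℕ} (z w : EuclideanSpace ℝ (Fin m))
    (e : ∀ i, z i ≠ 0 ↔ w i ≠ 0) : zeroNorm z = zeroNorm w := by
  unfold zeroNorm
  congr 1
  ext i
  simp [e i]

/-- near a P-stationary point `z*` of `h + g`, nonnegative points
with the same support as `z*` have equal `ℓ₀` norm and `h(z) ≥ h(z*)`, while those
with a different support satisfy `h(z) + μ‖z‖₀ ≥ h(z*) + μ‖z*‖₀ + μ/2`. -/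
theorem stmt13 {m : ℕ} (μ τ : ℝ) (hμ : 0 < μ) (hτ : 0 < τ)
    (h : EuclideanSpace ℝ (Fin m) → ℝ)
    (h' : EuclideanSpace ℝ (Fin m) → EuclideanSpace ℝ (Fin m))
    (hconv : ConvexOn ℝ Set.univ h)
    (hdiff : ∀ z, HasGradientAt h (h' z) z)
    (zstar : EuclideanSpace ℝ (Fin m))
    (hstat : zstar ∈ proxSet μ τ (zstar - τ • h' zstar)) :
    ∃ δ : ℝ, 0 < δ ∧ ∀ z : EuclideanSpace ℝ (Fin m),
      ‖z - zstar‖ < δ → (∀ i, 0 ≤ z i) →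
      (({i | z i ≠ 0} = {i | zstar i ≠ 0}) →
          zeroNorm z = zeroNorm zstar ∧ h zstar ≤ h z) ∧
      (({i | z i ≠ 0} ≠ {i | zstar i ≠ 0}) →
          h zstar + μ * zeroNorm zstar + μ / 2 ≤ h z + μ * zeroNorm z) := by
  obtain ⟨hn, hp⟩ := prox_ineq μ τ hτ zstar (h' zstar) hstat
  have hc : ContinuousAt h zstar := (hdiff zstar).continuousAt
  have ev1 : ∀ᶠ z in 𝓝 zstar, h zstar - μ / 2 < h z :=
    hc.eventually (lt_mem_nhds (by linarith))
  have ev2 : ∀ᶠ z in 𝓝 zstar, ∀ i, zstar i ≠ 0 → z i ≠ 0 := by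
    rw [Filter.eventually_all]
    intro i
    by_cases hi : zstar i = 0
    · simp [hi]
    · have hci : ContinuousAt (fun z : EuclideanSpace ℝ (Fin m) => z i) zstar := by fun_prop
      filter_upwards [hci.eventually_ne hi] with z hz _ using hz
  obtain ⟨δ, hδ, hball⟩ := Metric.eventually_nhds_iff.1 (ev1.and ev2)
  refine ⟨δ, hδ, fun z hz hz0 => ?_⟩
  obtain ⟨hA, hB⟩ := hball (y := z) (by rwa [dist_eq_norm])
  constructor
  · intro hs
    have hs' : ∀ i, z i ≠ 0 ↔ zstar i ≠ 0 := fun i => Set.ext_iff.1 hs i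
    refine ⟨zeroNorm_congr _ _ hs', ?_⟩
    have key : ∀ t : ℝ, 0 < t → t < 1 →
        0 ≤ t * (1 / (2 * τ) * ‖z - zstar‖ ^ 2) + inner ℝ (z - zstar) (h' zstar) := by
      intro t ht ht1
      have hw : ∀ i, (zstar + t • (z - zstar)) i = (1 - t) * zstar i + t * z i := by
        intro i; simp; ring
      have h1 := hp (zstar + t • (z - zstar)) (fun i => by
        rw [hw]
        have := mul_nonneg (sub_nonneg.2 ht1.le) (hn i)
        have := mul_nonneg ht.le (hz0 i)
        linarith)
      rw [zeroNorm_congr (zstar + t • (z - zstar)) zstar (fun i => by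
        rw [hw]
        by_cases hi : zstar i = 0
        · have : z i = 0 := by
            by_contra hc; exact (hs' i).1 hc hi
          simp [hi, this]
        · have h2 : 0 < zstar i := lt_of_le_of_ne (hn i) (Ne.symm hi)
          have := mul_pos (sub_pos.2 ht1) h2
          have := mul_nonneg ht.le (hz0 i)
          refine ⟨fun _ => hi, fun _ => ?_⟩
          linarith), add_sub_cancel_left, norm_smul, inner_smul_left] at h1
      simp only [Real.norm_eq_abs, abs_of_pos ht, conj_trivial] at h1
      refine nonneg_of_mul_nonneg_right (a := t) ?_ ht
      nlinarith [h1]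
    have hin : 0 ≤ inner ℝ (z - zstar) (h' zstar) := by
      have ht : Tendsto (fun t : ℝ => t * (1 / (2 * τ) * ‖z - zstar‖ ^ 2)
          + inner ℝ (z - zstar) (h' zstar)) (𝓝[>] 0) (𝓝 (inner ℝ (z - zstar) (h' zstar))) := by
        have : ContinuousAt (fun t : ℝ => t * (1 / (2 * τ) * ‖z - zstar‖ ^ 2)
          + inner ℝ (z - zstar) (h' zstar)) 0 := by fun_prop
        have h2 := this.tendsto
        simp only [zero_mul, zero_add] at h2
        exact h2.mono_left nhdsWithin_le_nhds
      refine ge_of_tendsto ht ?_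
      filter_upwards [Ioo_mem_nhdsGT (zero_lt_one' ℝ)] with t ht
      exact key t ht.1 ht.2
    have hcl : ConvexOn ℝ Set.univ (fun t : ℝ => h (AffineMap.lineMap zstar z t)) := by
      exact hconv.comp_affineMap (AffineMap.lineMap (k := ℝ) zstar z)
    have hd : HasDerivAt (fun t : ℝ => h (AffineMap.lineMap zstar z t))
        (inner ℝ (z - zstar) (h' zstar)) 0 := by
      have h1 : HasDerivAt (fun t : ℝ => AffineMap.lineMap zstar z t) (z - zstar) (0 : ℝ) :=
        AffineMap.hasDerivAt_lineMap
      have h2 : HasFDerivAt h (InnerProductSpace.toDual ℝ _ (h' zstar))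
          (AffineMap.lineMap zstar z (0 : ℝ)) := by
        simpa using (hdiff zstar).hasFDerivAt
      have h3 := h2.comp_hasDerivAt (0 : ℝ) h1
      rw [InnerProductSpace.toDual_apply_apply, real_inner_comm] at h3
      exact h3
    have h4 := hcl.le_slope_of_hasDerivAt (Set.mem_univ 0) (Set.mem_univ 1) zero_lt_one hd
    simp [slope_def_field] at h4
    linarith
  · intro hs
    have hlt : zeroNorm zstar + 1 ≤ zeroNorm z := by
      unfold zeroNorm
      refine Finset.card_lt_card (Finset.ssubset_iff_subset_ne.2 ⟨?_, ?_⟩)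
      · intro i
        simpa using hB i
      · intro he
        apply hs
        ext i
        have := Finset.ext_iff.1 he i
        simpa using this.symm
    have hlt' : (zeroNorm zstar : ℝ) + 1 ≤ zeroNorm z := by exact_mod_cast hlt
    have := mul_le_mul_of_nonneg_left hlt' hμ.le
    linarith
end

section
/- Let h : ℝ^m → ℝ be differentiable with ℓ_h-Lipschitz gradient (ℓ_h > 0), τ > 0, z ∈ ℝ^m, and v ∈ Prox_{τg}(z − τ∇h(z)). Define p := (z − v)/τ + ∇h(v) − ∇h(z). Then v_i ≥ 0 for all i, (p − ∇h(v))_i = 0 for every i with v_i > 0 (i.e. p ∈ ∇h(v) + ∂g(v)), and ‖p‖ ≤ (1/τ + ℓ_h)‖v − z‖. -/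
open scoped RealInnerProductSpace
open Filter Topology

/-- for `v ∈ Prox_{τg}(z − τ∇h(z))` and
`p = (z − v)/τ + ∇h(v) − ∇h(z)`, one has `v ≥ 0`, `p ∈ ∇h(v) + ∂g(v)`
(i.e. `(p − ∇h(v))ᵢ = 0` whenever `vᵢ > 0`), and `‖p‖ ≤ (1/τ + ℓ_h)‖v − z‖`. -/
theorem stmt15 {m : ℕ} (μ ℓh τ : ℝ) (hμ : 0 < μ) (hℓ : 0 < ℓh) (hτ : 0 < τ)
    (h : EuclideanSpace ℝ (Fin m) → ℝ)
    (h' : EuclideanSpace ℝ (Fin m) → EuclideanSpace ℝ (Fin m))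
    (hdiff : ∀ z, HasGradientAt h (h' z) z)
    (hlip : ∀ x y, ‖h' x - h' y‖ ≤ ℓh * ‖x - y‖)
    (z v : EuclideanSpace ℝ (Fin m))
    (hv : v ∈ proxSet μ τ (z - τ • h' z)) :
    (∀ i, 0 ≤ v i) ∧
    (∀ i, 0 < v i →
      ((1 / τ) • (z - v) + h' v - h' z) i - h' v i = 0) ∧
    ‖(1 / τ) • (z - v) + h' v - h' z‖ ≤ (1 / τ + ℓh) * ‖v - z‖ := by
  have hv' : ∀ w, gfun μ v + ((1 / (2 * τ) * ‖v - (z - τ • h' z)‖ ^ 2 : ℝ) : EReal)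
        ≤ gfun μ w + ((1 / (2 * τ) * ‖w - (z - τ • h' z)‖ ^ 2 : ℝ) : EReal) := hv
  have hpos : ∀ i, 0 ≤ v i := by
    by_contra hn
    have h0 := hv' 0
    have e1 : gfun μ v = ⊤ := by unfold gfun; rw [if_neg hn]
    have e2 : gfun μ (0 : EuclideanSpace ℝ (Fin m))
        = ((μ * zeroNorm (0 : EuclideanSpace ℝ (Fin m)) : ℝ) : EReal) := by
      unfold gfun; rw [if_pos (by intro i; simp)]
    rw [e1, e2, EReal.top_add_coe, ← EReal.coe_add] at h0
    exact absurd h0 (not_le.mpr (EReal.coe_lt_top _))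
  refine ⟨hpos, ?_, ?_⟩
  · intro i hi
    have key : v i - (z i - τ * h' z i) = 0 := by
      set u := z - τ • h' z with hu
      have hui : (v - u) i = v i - (z i - τ * h' z i) := by simp [hu]
      rw [← hui]
      set d := (v - u) i with hd
      have hden : 0 < v i + |d| := by positivity
      obtain ⟨s, hs⟩ : ∃ s, s = v i / (v i + |d|) := ⟨_, rfl⟩
      have hs0 : 0 < s := by rw [hs]; positivity
      have hsm : s * (v i + |d|) = v i := by rw [hs]; field_simp
      have hs1 : s ≤ 1 := by
        rw [hs, div_le_one hden]; linarith [abs_nonneg d]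
      have hwi : 0 < v i + -(s * d) := by
        have h1 : s * d ≤ s * |d| := mul_le_mul_of_nonneg_left (le_abs_self d) hs0.le
        have h2 : 0 < s * v i := mul_pos hs0 hi
        nlinarith
      set w : EuclideanSpace ℝ (Fin m) := v + EuclideanSpace.single i (-(s * d)) with hw
      have hwii : w i = v i + -(s * d) := by simp [hw]
      have hwj : ∀ j, j ≠ i → w j = v j := by intro j hj; simp [hw, hj]
      have hwpos : ∀ j, 0 ≤ w j := by
        intro j
        by_cases hj : j = i
        · subst hj; rw [hwii]; exact hwi.le
        · rw [hwj j hj]; exact hpos j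
      have hz : zeroNorm w = zeroNorm v := by
        unfold zeroNorm
        congr 1
        apply Finset.filter_congr
        intro j _
        by_cases hj : j = i
        · subst hj; rw [hwii]
          exact ⟨fun _ => hi.ne', fun _ => hwi.ne'⟩
        · rw [hwj j hj]
      have h0 := hv' w
      have e1 : gfun μ v = ((μ * zeroNorm v : ℝ) : EReal) := by
        unfold gfun; rw [if_pos hpos]
      have e2 : gfun μ w = ((μ * zeroNorm v : ℝ) : EReal) := by
        unfold gfun; rw [if_pos hwpos, hz]
      rw [e1, e2, ← EReal.coe_add, ← EReal.coe_add, EReal.coe_le_coe_iff] at h0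
      have h1 : ‖v - u‖ ^ 2 ≤ ‖w - u‖ ^ 2 :=
        le_of_mul_le_mul_left (by linarith) (by positivity : 0 < 1 / (2 * τ))
      have h2 : w - u = (v - u) + EuclideanSpace.single i (-(s * d)) := by
        rw [hw]; abel
      have h3 : inner ℝ (v - u) (EuclideanSpace.single i (-(s * d))) = -(s * d) * d := by
        rw [EuclideanSpace.inner_single_right]; simp [hd]
      have h4 : ‖(EuclideanSpace.single i (-(s * d)) : EuclideanSpace ℝ (Fin m))‖ ^ 2
          = (s * d) ^ 2 := by
        rw [EuclideanSpace.norm_single, Real.norm_eq_abs, sq_abs]; ring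
      rw [h2, norm_add_sq_real, h3, h4] at h1
      have h5 : s * (2 - s) * d ^ 2 ≤ 0 := by nlinarith
      have h6 : 0 < s * (2 - s) := mul_pos hs0 (by linarith)
      have h7 : d ^ 2 ≤ 0 := by
        by_contra hc
        push Not at hc
        linarith [mul_pos h6 hc]
      exact pow_eq_zero_iff (two_ne_zero) |>.mp (le_antisymm h7 (sq_nonneg d))
    simp only [PiLp.sub_apply, PiLp.add_apply, PiLp.smul_apply, smul_eq_mul]
    have : z i - v i = τ * h' z i := by linarith
    rw [this]
    field_simp
    ring
  · calc ‖(1 / τ) • (z - v) + h' v - h' z‖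
        = ‖(1 / τ) • (z - v) + (h' v - h' z)‖ := by rw [add_sub_assoc]
      _ ≤ ‖(1 / τ) • (z - v)‖ + ‖h' v - h' z‖ := norm_add_le _ _
      _ ≤ (1 / τ) * ‖v - z‖ + ℓh * ‖v - z‖ := by
          refine add_le_add (le_of_eq ?_) (hlip v z)
          rw [norm_smul, Real.norm_of_nonneg (by positivity), norm_sub_rev]
      _ = (1 / τ + ℓh) * ‖v - z‖ := by ring
end

section
/- Let F : ℝ^m → ℝ ∪ {+∞}, let {z^k} and {v^k} be sequences in ℝ^m with F(z^0) < +∞, and let η₀, c₁ > 0. Suppose for all k: F(z^k) − F(v^k) ≥ η₀‖v^k − z^k‖² and F(v^k) − F(z^{k+1}) ≥ c₁‖v^k − z^{k+1}‖², and that { F(z^k) } is bounded below. Then there exists C ∈ ℝ such that lim_{k→∞} F(z^k) = lim_{k→∞} F(v^k) = C, and moreover ‖v^k − z^k‖ → 0 and ‖v^k − z^{k+1}‖ → 0 as k → ∞. -/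
open Filter Topology

lemma aux_norm_tendsto (d a : ℕ → ℝ) (c : ℝ) (hc : 0 < c) (hd : ∀ k, 0 ≤ d k)
    (h : ∀ k, c * d k ^ 2 ≤ a k) (ha : Tendsto a atTop (𝓝 0)) :
    Tendsto d atTop (𝓝 0) := by
  have h1 : Tendsto (fun k => Real.sqrt (a k / c)) atTop (𝓝 0) := by
    have := (ha.div_const c).sqrt
    simpa using this
  refine squeeze_zero hd (fun k => ?_) h1
  apply Real.le_sqrt_of_sq_le
  rw [le_div_iff₀ hc]
  linarith [h k]

/-- if `F(z⁰) < +∞`, the sufficient-descent inequalities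
`F(zᵏ) − F(vᵏ) ≥ η₀‖vᵏ − zᵏ‖²` and `F(vᵏ) − F(zᵏ⁺¹) ≥ c₁‖vᵏ − zᵏ⁺¹‖²` hold, and
`{F(zᵏ)}` is bounded below, then both function-value sequences converge to a common
real limit `C` and the successive changes `‖vᵏ − zᵏ‖`, `‖vᵏ − zᵏ⁺¹‖` tend to `0`. -/
theorem stmt16 {m : ℕ} (F : EuclideanSpace ℝ (Fin m) → EReal)
    (z v : ℕ → EuclideanSpace ℝ (Fin m)) (η₀ c₁ : ℝ)
    (hη : 0 < η₀) (hc : 0 < c₁)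
    (hfin : F (z 0) < ⊤)
    (h1 : ∀ k, F (v k) + ((η₀ * ‖v k - z k‖ ^ 2 : ℝ) : EReal) ≤ F (z k))
    (h2 : ∀ k, F (z (k + 1)) + ((c₁ * ‖v k - z (k + 1)‖ ^ 2 : ℝ) : EReal) ≤ F (v k))
    (hbdd : ∃ B : ℝ, ∀ k, (B : EReal) ≤ F (z k)) :
    ∃ C : ℝ,
      Tendsto (fun k => F (z k)) atTop (𝓝 (C : EReal)) ∧
      Tendsto (fun k => F (v k)) atTop (𝓝 (C : EReal)) ∧
      Tendsto (fun k => ‖v k - z k‖) atTop (𝓝 0) ∧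
      Tendsto (fun k => ‖v k - z (k + 1)‖) atTop (𝓝 0) := by
  obtain ⟨B, hB⟩ := hbdd
  have n1 : ∀ k, 0 ≤ η₀ * ‖v k - z k‖ ^ 2 := fun k => by positivity
  have n2 : ∀ k, 0 ≤ c₁ * ‖v k - z (k + 1)‖ ^ 2 := fun k => by positivity
  have l1 : ∀ k, F (v k) ≤ F (z k) := fun k =>
    le_trans (le_add_of_nonneg_right (EReal.coe_nonneg.2 (n1 k))) (h1 k)
  have l2 : ∀ k, F (z (k + 1)) ≤ F (v k) := fun k =>
    le_trans (le_add_of_nonneg_right (EReal.coe_nonneg.2 (n2 k))) (h2 k)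
  have tz : ∀ k, F (z k) < ⊤ := by
    intro k
    induction k with
    | zero => exact hfin
    | succ k ih => exact lt_of_le_of_lt ((l2 k).trans (l1 k)) ih
  have ez : ∀ k, ∃ r : ℝ, F (z k) = (r : EReal) := fun k =>
    ⟨(F (z k)).toReal, (EReal.coe_toReal (tz k).ne
      (lt_of_lt_of_le (EReal.bot_lt_coe B) (hB k)).ne').symm⟩
  have ev : ∀ k, ∃ r : ℝ, F (v k) = (r : EReal) := fun k =>
    ⟨(F (v k)).toReal, (EReal.coe_toReal (lt_of_le_of_lt (l1 k) (tz k)).ne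
      (lt_of_lt_of_le (EReal.bot_lt_coe B) ((hB (k + 1)).trans (l2 k))).ne').symm⟩
  choose f hf using ez
  choose g hg using ev
  simp only [hf, hg] at h1 h2 hB ⊢
  have h1' : ∀ k, g k + η₀ * ‖v k - z k‖ ^ 2 ≤ f k := fun k => by exact_mod_cast h1 k
  have h2' : ∀ k, f (k + 1) + c₁ * ‖v k - z (k + 1)‖ ^ 2 ≤ g k := fun k => by
    exact_mod_cast h2 k
  have hB' : ∀ k, B ≤ f k := fun k => by exact_mod_cast hB k
  have anti : Antitone f := antitone_nat_of_succ_le fun k => by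
    linarith [h1' k, h2' k, n1 k, n2 k]
  have tf := tendsto_atTop_ciInf anti ⟨B, by rintro _ ⟨k, rfl⟩; exact hB' k⟩
  set C := ⨅ i, f i
  have tf' : Tendsto (fun k => f (k + 1)) atTop (𝓝 C) := (tendsto_add_atTop_iff_nat 1).2 tf
  have tg : Tendsto g atTop (𝓝 C) := tendsto_of_tendsto_of_tendsto_of_le_of_le tf' tf
    (fun k => by show f (k + 1) ≤ g k; linarith [h2' k, n2 k])
    (fun k => by show g k ≤ f k; linarith [h1' k, n1 k])
  refine ⟨C, EReal.tendsto_coe.2 tf, EReal.tendsto_coe.2 tg, ?_, ?_⟩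
  · exact aux_norm_tendsto _ (fun k => f k - g k) η₀ hη (fun k => norm_nonneg _)
      (fun k => by linarith [h1' k]) (by simpa using tf.sub tg)
  · exact aux_norm_tendsto _ (fun k => g k - f (k + 1)) c₁ hc (fun k => norm_nonneg _)
      (fun k => by linarith [h2' k]) (by simpa using tg.sub tf')
end

section
/- Let h : ℝ^m → ℝ be continuously differentiable and τ > 0. Let {z^k} and {v^k} be sequences in ℝ^m with v^k ∈ Prox_{τg}(z^k − τ∇h(z^k)) for all k, z^k → z* as k → ∞, and ‖v^k − z^k‖ → 0. Then z* ∈ Prox_{τg}(z* − τ∇h(z*)), i.e. z* is a P-stationary point of min h + g with parameter τ. -/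
open scoped RealInnerProductSpace
open Filter Topology

/-- stability of P-stationarity under limits: if
`vᵏ ∈ Prox_{τg}(zᵏ − τ∇h(zᵏ))`, `zᵏ → z*` and `‖vᵏ − zᵏ‖ → 0`, then
`z* ∈ Prox_{τg}(z* − τ∇h(z*))`. -/
theorem stmt17 {m : ℕ} (μ τ : ℝ) (hμ : 0 < μ) (hτ : 0 < τ)
    (h : EuclideanSpace ℝ (Fin m) → ℝ)
    (h' : EuclideanSpace ℝ (Fin m) → EuclideanSpace ℝ (Fin m))
    (hdiff : ∀ z, HasGradientAt h (h' z) z)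
    (hcont : Continuous h')
    (z v : ℕ → EuclideanSpace ℝ (Fin m))
    (zstar : EuclideanSpace ℝ (Fin m))
    (hv : ∀ k, v k ∈ proxSet μ τ (z k - τ • h' (z k)))
    (hz : Tendsto z atTop (𝓝 zstar))
    (hvz : Tendsto (fun k => ‖v k - z k‖) atTop (𝓝 0)) :
    zstar ∈ proxSet μ τ (zstar - τ • h' zstar) := by
  have hvs : Tendsto v atTop (𝓝 zstar) := by
    have h0 : Tendsto (fun k => v k - z k) atTop (𝓝 0) :=
      tendsto_zero_iff_norm_tendsto_zero.mpr hvz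
    simpa using h0.add hz
  have hu : Tendsto (fun k => z k - τ • h' (z k)) atTop (𝓝 (zstar - τ • h' zstar)) :=
    hz.sub (((hcont.tendsto zstar).comp hz).const_smul τ)
  have hci : ∀ i, Tendsto (fun k => v k i) atTop (𝓝 (zstar i)) := fun i =>
    ((EuclideanSpace.proj (𝕜 := ℝ) i).continuous.tendsto zstar).comp hvs
  have hvnn : ∀ k i, 0 ≤ v k i := by
    intro k
    by_contra hn
    have h1 := hv k 0
    have h2 : gfun μ (v k) = ⊤ := if_neg hn
    have h3 : gfun μ (0 : EuclideanSpace ℝ (Fin m)) = ((μ * zeroNorm (0 : EuclideanSpace ℝ (Fin m)) : ℝ) : EReal) :=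
      if_pos (fun i => le_refl _)
    rw [h2, h3, EReal.top_add_coe, ← EReal.coe_add] at h1
    exact EReal.coe_ne_top _ (top_le_iff.mp h1)
  have hznn : ∀ i, 0 ≤ zstar i := fun i =>
    ge_of_tendsto' (hci i) (fun k => hvnn k i)
  have hcard : ∀ᶠ k in atTop, zeroNorm zstar ≤ zeroNorm (v k) := by
    have : ∀ᶠ k in atTop, ∀ i, zstar i ≠ 0 → v k i ≠ 0 := by
      rw [eventually_all]
      intro i
      by_cases hi : zstar i = 0
      · simp [hi]
      · filter_upwards [(hci i).eventually_ne hi] with k hk _ using hk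
    filter_upwards [this] with k hk
    unfold zeroNorm
    apply Finset.card_le_card
    intro i
    simpa using hk i
  intro w
  by_cases hw : ∀ i, 0 ≤ w i
  · have hgw : gfun μ w = ((μ * zeroNorm w : ℝ) : EReal) := if_pos hw
    have hgz : gfun μ zstar = ((μ * zeroNorm zstar : ℝ) : EReal) := if_pos hznn
    rw [hgw, hgz, ← EReal.coe_add, ← EReal.coe_add, EReal.coe_le_coe_iff]
    refine le_of_tendsto_of_tendsto
      ((((hvs.sub hu).norm.pow 2).const_mul (1 / (2 * τ))).const_add (μ * zeroNorm zstar))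
      ((((hu.const_sub w).norm.pow 2).const_mul (1 / (2 * τ))).const_add (μ * zeroNorm w)) ?_
    filter_upwards [hcard] with k hk
    have h1 := hv k w
    have hgv : gfun μ (v k) = ((μ * zeroNorm (v k) : ℝ) : EReal) := if_pos (hvnn k)
    rw [hgw, hgv, ← EReal.coe_add, ← EReal.coe_add, EReal.coe_le_coe_iff] at h1
    have h2 : μ * (zeroNorm zstar : ℝ) ≤ μ * (zeroNorm (v k) : ℝ) := by
      gcongr
    linarith
  · have hgw : gfun μ w = ⊤ := if_neg hw
    rw [hgw, EReal.top_add_coe]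
    exact le_top
end

section
/- Let {y^j}_{j≥0} be a sequence in ℝ^m, C ∈ ℝ, s > 0, η₁, η₂ > 0, and let ψ : [0, s) → ℝ be concave and continuous with ψ(0) = 0, continuously differentiable on (0, s) with ψ'(t) > 0 for all t ∈ (0, s). Let a_j be a real sequence with: (a) a_j − a_{j+1} ≥ η₂‖y^{j+1} − y^j‖² for all j; (b) C < a_j < C + s for all j and a_j → C; and (c) ψ'(a_j − C)·η₁‖y^j − y^{j−1}‖ ≥ 1 for all j ≥ 1. Then Σ_{j=0}^{∞} ‖y^{j+1} − y^j‖ < ∞; in particular {y^j} is a Cauchy sequence and converges in ℝ^m. -/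
open Filter Topology

/-- finite length of a sequence satisfying sufficient descent, a
relative error bound and a PŁK inequality with desingularizing function `ψ`:
the total length `Σ ‖y^{j+1} − y^j‖` is finite, so `{y^j}` is Cauchy and converges. -/
theorem stmt18 {m : ℕ} (y : ℕ → EuclideanSpace ℝ (Fin m)) (a : ℕ → ℝ)
    (C s η₁ η₂ : ℝ) (hs : 0 < s) (hη₁ : 0 < η₁) (hη₂ : 0 < η₂)
    (ψ ψ' : ℝ → ℝ)
    (hconc : ConcaveOn ℝ (Set.Ico 0 s) ψ)
    (hcont : ContinuousOn ψ (Set.Ico 0 s))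
    (hψ0 : ψ 0 = 0)
    (hderiv : ∀ t ∈ Set.Ioo (0 : ℝ) s, HasDerivAt ψ (ψ' t) t)
    (hψ'cont : ContinuousOn ψ' (Set.Ioo 0 s))
    (hψ'pos : ∀ t ∈ Set.Ioo (0 : ℝ) s, 0 < ψ' t)
    (ha1 : ∀ j, η₂ * ‖y (j + 1) - y j‖ ^ 2 ≤ a j - a (j + 1))
    (ha2 : ∀ j, C < a j ∧ a j < C + s)
    (ha3 : Tendsto a atTop (𝓝 C))
    (ha4 : ∀ j, 1 ≤ j → 1 ≤ ψ' (a j - C) * (η₁ * ‖y j - y (j - 1)‖)) :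
    Summable (fun j => ‖y (j + 1) - y j‖) ∧ CauchySeq y ∧
      ∃ ylim, Tendsto y atTop (𝓝 ylim) := by
  have hmem : ∀ j, a j - C ∈ Set.Ioo (0 : ℝ) s := fun j =>
    ⟨by linarith [(ha2 j).1], by linarith [(ha2 j).2]⟩
  -- tangent-line inequality
  have tang : ∀ x t, 0 ≤ x → x ≤ t → t ∈ Set.Ioo (0 : ℝ) s →
      ψ' t * (t - x) ≤ ψ t - ψ x := by
    intro x t hx hxt ht
    rcases hxt.eq_or_lt with h | h
    · subst h; simp
    · have := hconc.le_slope_of_hasDerivAt (x := x) (y := t)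
        ⟨hx, h.trans ht.2⟩ ⟨ht.1.le, ht.2⟩ h (hderiv t ht)
      rw [slope_def_field, le_div_iff₀ (by linarith)] at this
      exact this
  have hp : ∀ j, 0 ≤ ψ (a j - C) := by
    intro j
    have h1 := tang 0 (a j - C) le_rfl (hmem j).1.le (hmem j)
    have h2 := mul_pos (hψ'pos _ (hmem j)) (hmem j).1
    rw [hψ0] at h1
    linarith
  have step : ∀ n, 2 * ‖y (n + 2) - y (n + 1)‖ ≤ ‖y (n + 1) - y n‖ +
      η₁ / η₂ * (ψ (a (n + 1) - C) - ψ (a (n + 2) - C)) := by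
    intro n
    have h1 := ha1 (n + 1)
    have h4 := ha4 (n + 1) (by omega)
    simp only [Nat.add_sub_cancel] at h4
    have hd := norm_nonneg (y (n + 2) - y (n + 1))
    have he := norm_nonneg (y (n + 1) - y n)
    rw [show n + 1 + 1 = n + 2 from rfl] at h1
    set d := ‖y (n + 2) - y (n + 1)‖
    set e := ‖y (n + 1) - y n‖
    have hle : a (n + 2) ≤ a (n + 1) := by
      have : 0 ≤ η₂ * d ^ 2 := by positivity
      linarith
    have h2 := tang (a (n + 2) - C) (a (n + 1) - C) (hmem _).1.le (by linarith) (hmem _)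
    have hpos := hψ'pos _ (hmem (n + 1))
    set q := ψ' (a (n + 1) - C)
    set D := ψ (a (n + 1) - C) - ψ (a (n + 2) - C)
    have h3 : q * (η₂ * d ^ 2) ≤ D := by
      refine le_trans (mul_le_mul_of_nonneg_left h1 hpos.le) ?_
      linarith
    have hD : 0 ≤ D := le_trans (by positivity) h3
    have h5 : η₂ * d ^ 2 ≤ η₁ * e * D := by
      calc η₂ * d ^ 2 = 1 * (η₂ * d ^ 2) := by ring
        _ ≤ (q * (η₁ * e)) * (η₂ * d ^ 2) :=
          mul_le_mul_of_nonneg_right h4 (by positivity)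
        _ = η₁ * e * (q * (η₂ * d ^ 2)) := by ring
        _ ≤ η₁ * e * D := mul_le_mul_of_nonneg_left h3 (by positivity)
    have h6 : d ^ 2 ≤ e * (η₁ / η₂ * D) := by
      have : e * (η₁ / η₂ * D) = (η₁ * e * D) / η₂ := by ring
      rw [this, le_div_iff₀ hη₂]; linarith
    have hK : 0 ≤ η₁ / η₂ * D := by positivity
    refine abs_le_of_sq_le_sq' ?_ (by positivity) |>.2
    nlinarith [sq_nonneg (e - η₁ / η₂ * D)]
  have hsum : ∀ n, ∑ i ∈ Finset.range n, ‖y (i + 1 + 1) - y (i + 1)‖ ≤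
      ‖y 1 - y 0‖ - ‖y (n + 1) - y n‖ +
        η₁ / η₂ * (ψ (a 1 - C) - ψ (a (n + 1) - C)) := by
    intro n
    induction n with
    | zero => simp
    | succ n ih =>
      rw [Finset.sum_range_succ]
      have := step n
      rw [show n + 1 + 1 = n + 2 from rfl]
      linarith
  have hS : Summable (fun j => ‖y (j + 1) - y j‖) := by
    rw [← summable_nat_add_iff 1]
    refine summable_of_sum_range_le (c := ‖y 1 - y 0‖ + η₁ / η₂ * ψ (a 1 - C))
      (fun _ => norm_nonneg _) fun n => (hsum n).trans ?_
    have h1 : 0 ≤ η₁ / η₂ * ψ (a (n + 1) - C) := mul_nonneg (by positivity) (hp _)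
    have h2 := norm_nonneg (y (n + 1) - y n)
    linarith
  have hC : CauchySeq y := by
    apply cauchySeq_of_summable_dist
    simpa [dist_eq_norm, norm_sub_rev] using hS
  exact ⟨hS, hC, cauchySeq_tendsto_of_complete hC⟩
end
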